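/- arXiv:1603.05715 — 3 statements merged into one kernel-verified Lean document; each statement's English description precedes it below -/
import Mathlib

section
/- Let (A,b,c) be a covering ILP with n constraints and m variables, let j ∈ Fin n, and let b' : Fin n → ℕ agree with b on every coordinate except b' j = 0. If (A,b',c) is feasible and constraint j is individually satisfiable (some x : Fin m → ℕ has ∑_i A j i * x i ≥ b j), then (A,b,c) is feasible and opt(A,b,c) ≤ opt(A,b',c) + Cost(j). -/
/-!
Add an optimal solution `x` of the relaxed program to a cheapest vector `y` satisfying
constraint `j`. Since all entries of `A` are nonnegative, `x + y` still satisfies every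
constraint met by `x` or by `y`, and its cost is the sum of the two costs by linearity.
-/

/-- `x` is feasible for the covering ILP `(A, b, c)`. -/
def Feasible {n m : ℕ} (A : Fin n → Fin m → ℕ) (b : Fin n → ℕ) (x : Fin m → ℕ) : Prop :=
  ∀ j, b j ≤ ∑ i, A j i * x i

/-- Optimal value of the covering ILP `(A, b, c)`. -/
noncomputable def ilpOpt {n m : ℕ} (A : Fin n → Fin m → ℕ) (b : Fin n → ℕ)
    (c : Fin m → ℕ) : ℕ :=
  sInf {v | ∃ x : Fin m → ℕ, Feasible A b x ∧ v = ∑ i, c i * x i}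

/-- `Cost(j)`: minimum objective value satisfying constraint `j` alone. -/
noncomputable def rowCost {n m : ℕ} (A : Fin n → Fin m → ℕ) (b : Fin n → ℕ)
    (c : Fin m → ℕ) (j : Fin n) : ℕ :=
  sInf {v | ∃ x : Fin m → ℕ, b j ≤ ∑ i, A j i * x i ∧ v = ∑ i, c i * x i}

/-- Removing a single constraint `j` (setting its demand to `0`) changes the optimal
value by at most `Cost(j)`: if `(A, b', c)` is feasible, where `b'` agrees with `b`
except `b' j = 0`, and constraint `j` is individually satisfiable, then `(A, b, c)` is
feasible and `opt(A, b, c) ≤ opt(A, b', c) + Cost(j)`. -/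
theorem opt_le_removed_add_rowCost {n m : ℕ}
    (A : Fin n → Fin m → ℕ) (b : Fin n → ℕ) (c : Fin m → ℕ)
    (j : Fin n) (b' : Fin n → ℕ)
    (hb'ne : ∀ j' : Fin n, j' ≠ j → b' j' = b j') (hb'j : b' j = 0)
    (hfeas' : ∃ x : Fin m → ℕ, Feasible A b' x)
    (hj : ∃ x : Fin m → ℕ, b j ≤ ∑ i, A j i * x i) :
    (∃ x : Fin m → ℕ, Feasible A b x) ∧
      ilpOpt A b c ≤ ilpOpt A b' c + rowCost A b c j := by
  -- Optimal solutions of the two problems exist because the value sets are nonempty.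
  obtain ⟨x, hx, hxc⟩ : ∃ x : Fin m → ℕ, Feasible A b' x ∧ ilpOpt A b' c = ∑ i, c i * x i :=
    Nat.sInf_mem (s := {v | ∃ x : Fin m → ℕ, Feasible A b' x ∧ v = ∑ i, c i * x i})
      (hfeas'.elim fun x hx => ⟨_, x, hx, rfl⟩)
  obtain ⟨y, hy, hyc⟩ : ∃ y : Fin m → ℕ,
      b j ≤ ∑ i, A j i * y i ∧ rowCost A b c j = ∑ i, c i * y i :=
    Nat.sInf_mem (s := {v | ∃ y : Fin m → ℕ, b j ≤ ∑ i, A j i * y i ∧ v = ∑ i, c i * y i})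
      (hj.elim fun y hy => ⟨_, y, hy, rfl⟩)
  have hxy : Feasible A b (x + y) := by
    intro k
    simp only [Pi.add_apply, mul_add, Finset.sum_add_distrib]
    by_cases hk : k = j
    · subst hk
      exact hy.trans (Nat.le_add_left _ _)
    · rw [← hb'ne k hk]
      exact (hx k).trans (Nat.le_add_right _ _)
  refine ⟨⟨x + y, hxy⟩, Nat.sInf_le ⟨x + y, hxy, ?_⟩⟩
  simp only [hxc, hyc, Pi.add_apply, mul_add, Finset.sum_add_distrib]
end

section
/- Fix N : ℕ and consider the following random process: sample X : Fin N → Bool with mutually independent coordinates, each uniform on {true, false}; let A := {i : X i = true} and B := {i : X i = false}; independently sample a uniformly random enumeration (duplicate-free list containing each element exactly once) ℓ_A of A and a uniformly random enumeration ℓ_B of B; output the concatenation ℓ_A ++ ℓ_B. Then the output is a uniformly random enumeration of Fin N: for every duplicate-free list ℓ of length N containing all elements of Fin N, the probability that the output equals ℓ is 1/N!. -/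
/-!
Fix the target enumeration `l`. The only way to write `l` as `lA ++ lB` with `lA` enumerating a
set of size `k` is `lA = l.take k`, `lB = l.drop k` (`bind_map_append_apply`), so `X` contributes
only if it is the indicator of the first `k` entries of `l` for some `k ≤ N`; such an `X`
contributes `1 / (k! (N - k)!) = (N choose k) / N!`. These `N + 1` indicators are distinct, each
has probability `2⁻ᴺ`, and `∑ k ≤ N, (N choose k) = 2ᴺ`, so the total is `1 / N!`.
-/

open scoped ENNReal

/-- If `p` is supported on lists of length `k`, then concatenating independent samples from `p`
and `q` yields `l` only by splitting `l` at position `k`. -/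
theorem bind_map_append_apply {α : Type*} (p q : PMF (List α)) (k : ℕ)
    (hp : ∀ a, p a ≠ 0 → a.length = k) (l : List α) :
    (p.bind fun a => q.map fun b => a ++ b) l = p (l.take k) * q (l.drop k) := by
  rw [PMF.bind_apply, tsum_eq_single (l.take k)]
  · congr 1
    rw [PMF.map_apply, tsum_eq_single (l.drop k)]
    · simp
    · intro b hb
      rw [if_neg]
      intro h
      apply hb
      have h2 : l.take k ++ l.drop k = l.take k ++ b := by rw [List.take_append_drop]; exact h
      exact (List.append_cancel_left h2).symm
  · intro a ha
    by_cases h0 : p a = 0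
    · simp [h0]
    · rw [PMF.map_apply, ENNReal.tsum_eq_zero.2, mul_zero]
      intro b
      rw [if_neg]
      rintro rfl
      apply ha
      rw [← hp a h0, List.take_left]

theorem inv_factorial_mul_inv_factorial {N k : ℕ} (hk : k ≤ N) :
    ((k.factorial : ℝ≥0∞))⁻¹ * (((N - k).factorial : ℝ≥0∞))⁻¹
      = (N.choose k : ℝ≥0∞) * ((N.factorial : ℝ≥0∞))⁻¹ := by
  have h0 : ∀ n : ℕ, (n.factorial : ℝ≥0∞) ≠ 0 := fun n => by
    exact_mod_cast n.factorial_ne_zero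
  have hc : (N.choose k : ℝ≥0∞) ≠ 0 := by
    exact_mod_cast (Nat.choose_pos hk).ne'
  have ht : ∀ n : ℕ, (n : ℝ≥0∞) ≠ ∞ := ENNReal.natCast_ne_top
  rw [← Nat.choose_mul_factorial_mul_factorial hk]
  push_cast
  rw [mul_assoc, ENNReal.mul_inv (Or.inl hc) (Or.inl (ht _)), ← mul_assoc,
    ENNReal.mul_inv_cancel hc (ht _), one_mul,
    ENNReal.mul_inv (Or.inl (h0 _)) (Or.inl (ht _))]

/-- Sample `X : Fin N → Bool` uniformly (equivalently, with mutually independent uniform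
coordinates); let `A = {i | X i = true}` and `B = {i | X i = false}`; independently sample
a uniformly random enumeration of `A` and of `B` (where `enum A` is assumed to be the
uniform distribution on duplicate-free lists enumerating `A`, each having probability
`1 / |A|!`), and output their concatenation. Then the output is a uniformly random
enumeration of `Fin N`: every duplicate-free list of length `N` containing all elements
of `Fin N` has probability exactly `1 / N!`. -/
theorem concat_of_uniform_enums_is_uniform (N : ℕ)
    (enum : Finset (Fin N) → PMF (List (Fin N)))
    (henum : ∀ (A : Finset (Fin N)) (l : List (Fin N)),
      enum A l = if l.Nodup ∧ l.toFinset = A then ((A.card.factorial : ℝ≥0∞))⁻¹ else 0)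
    (output : PMF (List (Fin N)))
    (houtput : output =
      (PMF.uniformOfFintype (Fin N → Bool)).bind fun X =>
        (enum (Finset.univ.filter fun i => X i = true)).bind fun lA =>
          (enum (Finset.univ.filter fun i => X i = false)).map fun lB => lA ++ lB) :
    ∀ l : List (Fin N), l.Nodup → l.length = N → (∀ i : Fin N, i ∈ l) →
      output l = ((N.factorial : ℝ≥0∞))⁻¹ := by
  intro l hnd hlen hall
  subst houtput
  have hsupp : ∀ (A : Finset (Fin N)) (a : List (Fin N)), enum A a ≠ 0 → a.length = A.card := by
    intro A a ha
    rw [henum] at ha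
    obtain ⟨h1, h2⟩ : a.Nodup ∧ a.toFinset = A := by
      by_contra h
      exact ha (if_neg h)
    rw [← h2, List.toFinset_card_of_nodup h1]
  -- `e k` is the indicator of the first `k` entries of `l`
  let e : ℕ → (Fin N → Bool) := fun k i => decide (i ∈ l.take k)
  have hA : ∀ k, (Finset.univ.filter fun i => e k i = true) = (l.take k).toFinset := by
    intro k
    ext i
    simp [e]
  have hB : ∀ k, (Finset.univ.filter fun i => e k i = false) = (l.drop k).toFinset := by
    intro k
    ext i
    have hi : i ∈ l.take k ++ l.drop k := by rw [List.take_append_drop]; exact hall i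
    have hd : (l.take k ++ l.drop k).Nodup := by rw [List.take_append_drop]; exact hnd
    have hdis := (List.nodup_append'.1 hd).2.2
    simp only [e, Finset.mem_filter, Finset.mem_univ, true_and, decide_eq_false_iff_not,
      List.mem_toFinset]
    exact ⟨fun h => (List.mem_append.1 hi).resolve_left h, fun h h' => hdis h' h⟩
  have htake : ∀ k, (l.take k).Nodup := fun k => hnd.sublist (List.take_sublist k l)
  have hdrop : ∀ k, (l.drop k).Nodup := fun k => hnd.sublist (List.drop_sublist k l)
  have hcA : ∀ k ≤ N, (l.take k).toFinset.card = k := by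
    intro k hk
    rw [List.toFinset_card_of_nodup (htake k), List.length_take, hlen, min_eq_left hk]
  have hcB : ∀ k, (l.drop k).toFinset.card = N - k := by
    intro k
    rw [List.toFinset_card_of_nodup (hdrop k), List.length_drop, hlen]
  rw [PMF.bind_apply, tsum_fintype]
  simp_rw [fun X : Fin N → Bool => bind_map_append_apply
    (enum (Finset.univ.filter fun i => X i = true))
    (enum (Finset.univ.filter fun i => X i = false)) _ (hsupp _) l]
  simp only [PMF.uniformOfFintype_apply]
  rw [← Finset.mul_sum, ← Finset.sum_of_injOn (s := Finset.range (N + 1)) e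
    (f := fun k => (N.choose k : ℝ≥0∞) * ((N.factorial : ℝ≥0∞))⁻¹)]
  · rw [← Finset.sum_mul, ← Nat.cast_sum, Nat.sum_range_choose, ← mul_assoc]
    simp only [Fintype.card_pi, Fintype.card_bool, Finset.prod_const, Finset.card_univ,
      Fintype.card_fin]
    rw [ENNReal.inv_mul_cancel, one_mul]
    · exact_mod_cast (pow_pos two_pos N).ne'
    · exact ENNReal.natCast_ne_top _
  · intro j hj k hk hjk
    simp only [Finset.coe_range, Set.mem_Iio] at hj hk
    rw [← hcA j (by omega), ← hcA k (by omega), ← hA, ← hA, hjk]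
  · intro k _
    simp
  · intro X _ hX
    rw [henum, if_neg, zero_mul]
    rintro ⟨-, h⟩
    apply hX
    refine ⟨(Finset.univ.filter fun i => X i = true).card, ?_, ?_⟩
    · have := Finset.card_le_univ (Finset.univ.filter fun i => X i = true)
      rw [Fintype.card_fin] at this
      simp only [Finset.coe_range, Set.mem_Iio]
      omega
    · funext i
      have hi := Finset.ext_iff.1 h i
      simp only [List.mem_toFinset, Finset.mem_filter, Finset.mem_univ, true_and] at hi
      simp only [e, hi]
      simp
  · intro k hk
    have hk' : k ≤ N := by
      have := Finset.mem_range.1 hk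
      omega
    rw [hA, hB, hcA k hk', henum, henum, if_pos ⟨htake k, rfl⟩, if_pos ⟨hdrop k, rfl⟩,
      hcA k hk', hcB, inv_factorial_mul_inv_factorial hk']
end

section
/- Let opt, Cost, M be natural numbers with 1 ≤ Cost ≤ opt ≤ M, let α ≥ 1 be a real number, and let K := {2^γ : 0 ≤ γ ≤ ⌈log₂ M⌉}. Let accept : ℕ → Prop satisfy: (i) for every k ∈ K with opt ≤ k, accept k holds; and (ii) for every k ∈ K with Cost ≤ k and (k : ℝ) ≤ opt/(32·α), accept k does not hold. Then the set {k ∈ K : Cost ≤ k ∧ accept k} is nonempty, and its minimum element k* satisfies (opt : ℝ) ≤ 32·α·k* and k* ≤ 2·opt; in particular, the output 32·α·k* lies in the interval [opt, 64·α·opt]. -/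
/-!
Let `p = 2 ^ ⌈log₂ opt⌉` be the least power of two that is at least `opt`. It lies in `K` because
`opt ≤ M`, it is accepted because `opt ≤ p`, and `Cost ≤ opt ≤ p`, so the candidate set is nonempty.
Minimality of `k*` then gives `k* ≤ p ≤ 2 * opt`. As `k*` itself is accepted and at least `Cost`,
the rejection hypothesis forces `k* > opt / (32 α)`.
-/

theorem two_pow_clog_le_two_mul {n : ℕ} (hn : 1 ≤ n) : 2 ^ Nat.clog 2 n ≤ 2 * n := by
  rcases hn.eq_or_lt with rfl | h
  · simp
  · have h1 := Nat.pow_pred_clog_lt_self (b := 2) one_lt_two h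
    have h2 : 0 < Nat.clog 2 n := Nat.clog_pos one_lt_two h
    obtain ⟨c, hc⟩ := Nat.exists_eq_succ_of_ne_zero h2.ne'
    rw [hc] at h1 ⊢
    simp only [Nat.pred_succ, Nat.succ_eq_add_one] at h1
    rw [Nat.pow_succ]
    omega

/-- Correctness of the power-of-two guessing scheme: if a tester accepts every guess
`k ∈ K = {2^γ : γ ≤ ⌈log₂ M⌉}` with `k ≥ opt` and rejects every `k ∈ K` with
`Cost ≤ k ≤ opt / (32 α)`, then among the guesses in `K` that are at least `Cost` and
accepted there is a smallest one, `k*`, and it satisfies `opt ≤ 32 α k*` and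
`k* ≤ 2 opt`; in particular the output `32 α k*` lies in `[opt, 64 α opt]`. -/
theorem guessing_scheme_correct (opt Cost M : ℕ)
    (hCost : 1 ≤ Cost) (hCopt : Cost ≤ opt) (hoptM : opt ≤ M)
    (α : ℝ) (hα : 1 ≤ α)
    (K : Set ℕ) (hK : K = {k | ∃ γ ≤ Nat.clog 2 M, k = 2 ^ γ})
    (accept : ℕ → Prop)
    (hacc : ∀ k ∈ K, opt ≤ k → accept k)
    (hrej : ∀ k ∈ K, Cost ≤ k → (k : ℝ) ≤ (opt : ℝ) / (32 * α) → ¬accept k)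
    (kstar : ℕ) (hkstar : kstar = sInf {k ∈ K | Cost ≤ k ∧ accept k}) :
    {k ∈ K | Cost ≤ k ∧ accept k}.Nonempty ∧
      (opt : ℝ) ≤ 32 * α * (kstar : ℝ) ∧
      kstar ≤ 2 * opt ∧
      32 * α * (kstar : ℝ) ≤ 64 * α * (opt : ℝ) := by
  have hp : opt ≤ 2 ^ Nat.clog 2 opt := Nat.le_pow_clog one_lt_two opt
  have hpK : 2 ^ Nat.clog 2 opt ∈ K := by
    rw [hK]
    exact ⟨_, Nat.clog_mono_right 2 hoptM, rfl⟩
  have hmem : 2 ^ Nat.clog 2 opt ∈ {k ∈ K | Cost ≤ k ∧ accept k} :=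
    ⟨hpK, hCopt.trans hp, hacc _ hpK hp⟩
  have hle : kstar ≤ 2 * opt :=
    hkstar ▸ (Nat.sInf_le hmem).trans (two_pow_clog_le_two_mul (hCost.trans hCopt))
  obtain ⟨hkK, hkC, hka⟩ : kstar ∈ {k ∈ K | Cost ≤ k ∧ accept k} :=
    hkstar ▸ Nat.sInf_mem ⟨_, hmem⟩
  have hlt : (opt : ℝ) / (32 * α) < kstar := by
    by_contra! h
    exact hrej _ hkK hkC h hka
  refine ⟨⟨_, hmem⟩, ?_, hle, ?_⟩
  · rw [div_lt_iff₀ (by positivity)] at hlt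
    linarith
  · have hle' : (kstar : ℝ) ≤ 2 * opt := by exact_mod_cast hle
    calc 32 * α * (kstar : ℝ) ≤ 32 * α * (2 * opt) := by gcongr
      _ = 64 * α * opt := by ring
end
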